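/- arXiv:2204.10487 — 6 statements merged into one kernel-verified Lean document; each statement's English description precedes it below -/
import Mathlib

section
/- Let E be an inner product space over ℂ, and let u, v ∈ E be orthonormal vectors (‖u‖ = ‖v‖ = 1 and ⟪u, v⟫ = 0). Let θ, φ be real numbers, let h = sin θ • u + cos θ • v, let R : E → E be the map R x = 2⟪h, x⟫ • h − x, and let S : E →ₗ[ℂ] E be any linear map with S u = −u and S v = v. Then R (S (cos φ • v + sin φ • u)) = cos(φ + 2θ) • v + sin(φ + 2θ) • u. -/
open scoped ComplexInnerProductSpace

/-!
On the circle `cos α • v + sin α • u`, the oracle `S` is the reflection `α ↦ -α` in the axis `v`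
and `2|h⟩⟨h| - I` is the reflection `α ↦ 2θ - α` in the axis `h`, which is the point at angle `θ`.
Their composite is the rotation `α ↦ α + 2θ`.
-/

/-- The point at angle `α` on the ellipse with conjugate radii `v` and `u`, measured from `v`
towards `u`. For orthonormal `v`, `u` these are the states that a Grover iteration moves through,
with `v` the bad and `u` the good state. The coefficients are real numbers coerced to `𝕜`. -/
noncomputable def ellipsePoint (𝕜 : Type*) {E : Type*} [RCLike 𝕜] [AddCommGroup E] [Module 𝕜 E]
    (v u : E) (α : ℝ) : E :=
  (Real.cos α : 𝕜) • v + (Real.sin α : 𝕜) • u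

section Module

variable {𝕜 E F : Type*} [RCLike 𝕜] [AddCommGroup E] [Module 𝕜 E] [AddCommGroup F] [Module 𝕜 F]

theorem map_ellipsePoint (S : E →ₗ[𝕜] F) (v u : E) (α : ℝ) :
    S (ellipsePoint 𝕜 v u α) = ellipsePoint 𝕜 (S v) (S u) α := by
  simp only [ellipsePoint, map_add, map_smul]

theorem ellipsePoint_neg_right (v u : E) (α : ℝ) :
    ellipsePoint 𝕜 v (-u) α = ellipsePoint 𝕜 v u (-α) := by
  simp only [ellipsePoint, Real.cos_neg, Real.sin_neg, RCLike.ofReal_neg, smul_neg, neg_smul]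

theorem two_mul_cos_sub_smul_ellipsePoint_sub (v u : E) (α β : ℝ) :
    (2 * (Real.cos (α - β) : 𝕜)) • ellipsePoint 𝕜 v u α - ellipsePoint 𝕜 v u β =
      ellipsePoint 𝕜 v u (2 * α - β) := by
  have cos_eq : Real.cos (2 * α - β) = 2 * Real.cos (α - β) * Real.cos α - Real.cos β := by
    rw [Real.two_mul_cos_mul_cos, sub_sub_cancel_left, Real.cos_neg]
    ring_nf
  have sin_eq : Real.sin (2 * α - β) = 2 * Real.cos (α - β) * Real.sin α - Real.sin β := by
    rw [mul_right_comm, Real.two_mul_sin_mul_cos]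
    ring_nf
  simp only [ellipsePoint, cos_eq, sin_eq]
  push_cast
  module

end Module

section InnerProductSpace

variable {𝕜 E : Type*} [RCLike 𝕜] [NormedAddCommGroup E] [InnerProductSpace 𝕜 E] {v u : E}

theorem inner_ellipsePoint_eq_cos_sub (hv : ‖v‖ = 1) (hu : ‖u‖ = 1)
    (hvu : inner 𝕜 v u = 0) (α β : ℝ) :
    inner 𝕜 (ellipsePoint 𝕜 v u α) (ellipsePoint 𝕜 v u β) = (Real.cos (α - β) : 𝕜) := by
  have huv : inner 𝕜 u v = 0 := inner_eq_zero_symm.mp hvu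
  simp only [ellipsePoint, inner_add_left, inner_add_right, inner_smul_left, inner_smul_right,
    RCLike.conj_ofReal, inner_self_eq_one_of_norm_eq_one hv, inner_self_eq_one_of_norm_eq_one hu,
    hvu, huv, Real.cos_sub]
  push_cast
  ring

theorem two_mul_inner_smul_ellipsePoint_sub (hv : ‖v‖ = 1) (hu : ‖u‖ = 1)
    (hvu : inner 𝕜 v u = 0) (α β : ℝ) :
    (2 * inner 𝕜 (ellipsePoint 𝕜 v u α) (ellipsePoint 𝕜 v u β)) • ellipsePoint 𝕜 v u α -
      ellipsePoint 𝕜 v u β = ellipsePoint 𝕜 v u (2 * α - β) := by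
  rw [inner_ellipsePoint_eq_cos_sub hv hu hvu, two_mul_cos_sub_smul_ellipsePoint_sub]

end InnerProductSpace

theorem grover_single_step_rotation_general
    {𝕜 E : Type*} [RCLike 𝕜] [NormedAddCommGroup E] [InnerProductSpace 𝕜 E]
    (u v : E) (hu : ‖u‖ = 1) (hv : ‖v‖ = 1) (huv : inner 𝕜 u v = 0)
    (θ φ : ℝ) (h : E)
    (hh : h = (Real.sin θ : 𝕜) • u + (Real.cos θ : 𝕜) • v)
    (R : E → E) (hR : ∀ x, R x = (2 * inner 𝕜 h x) • h - x)
    (S : E →ₗ[𝕜] E) (hSu : S u = -u) (hSv : S v = v) :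
    R (S ((Real.cos φ : 𝕜) • v + (Real.sin φ : 𝕜) • u)) =
      (Real.cos (φ + 2 * θ) : 𝕜) • v + (Real.sin (φ + 2 * θ) : 𝕜) • u := by
  have h_eq : h = ellipsePoint 𝕜 v u θ := by rw [hh, add_comm, ellipsePoint]
  have hS : S (ellipsePoint 𝕜 v u φ) = ellipsePoint 𝕜 v u (-φ) := by
    rw [map_ellipsePoint, hSv, hSu, ellipsePoint_neg_right]
  have hvu : inner 𝕜 v u = 0 := inner_eq_zero_symm.mp huv
  calc R (S (ellipsePoint 𝕜 v u φ))
      = ellipsePoint 𝕜 v u (2 * θ - -φ) := by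
        rw [hS, hR, h_eq, two_mul_inner_smul_ellipsePoint_sub hv hu hvu]
    _ = ellipsePoint 𝕜 v u (φ + 2 * θ) := by rw [sub_neg_eq_add, add_comm]

/-- One Grover iteration `(2|h⟩⟨h| − I) ∘ S` acts as a rotation by angle `2θ` on the
real span of the orthonormal pair `u, v`, where `h = sin θ • u + cos θ • v` and the
oracle `S` negates `u` and fixes `v`. -/
theorem grover_single_step_rotation
    {E : Type*} [NormedAddCommGroup E] [InnerProductSpace ℂ E]
    (u v : E) (hu : ‖u‖ = 1) (hv : ‖v‖ = 1) (huv : ⟪u, v⟫ = 0)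
    (θ φ : ℝ) (h : E)
    (hh : h = (Real.sin θ : ℂ) • u + (Real.cos θ : ℂ) • v)
    (R : E → E) (hR : ∀ x, R x = (2 * ⟪h, x⟫) • h - x)
    (S : E →ₗ[ℂ] E) (hSu : S u = -u) (hSv : S v = v) :
    R (S ((Real.cos φ : ℂ) • v + (Real.sin φ : ℂ) • u)) =
      (Real.cos (φ + 2 * θ) : ℂ) • v + (Real.sin (φ + 2 * θ) : ℂ) • u :=
  grover_single_step_rotation_general u v hu hv huv θ φ h hh R hR S hSu hSv
end

section
/- Let E be an inner product space over ℂ, and let u, v ∈ E be orthonormal vectors (‖u‖ = ‖v‖ = 1 and ⟪u, v⟫ = 0). Let θ be a real number, let h = sin θ • u + cos θ • v, let R : E → E be the map R x = 2⟪h, x⟫ • h − x, and let S : E →ₗ[ℂ] E be any linear map with S u = −u and S v = v. Then for every natural number k, (R ∘ S)^k h = cos((2k+1)θ) • v + sin((2k+1)θ) • u. -/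
open scoped ComplexInnerProductSpace

/-! On the unit circle of the real plane spanned by the orthonormal pair `u, v`, the map `S` acts as
the reflection `φ ↦ -φ` and the map `R` as the reflection `φ ↦ 2θ - φ` of the angle `φ`. Their
composite is the rotation `φ ↦ φ + 2θ`, so `k` iterations take the initial angle `θ` to
`(2k + 1)θ`. -/

section Superposition

variable {𝕜 E : Type*} [RCLike 𝕜]

section Module

variable [AddCommGroup E] [Module 𝕜 E]

variable (𝕜) in
/-- The state at angle `φ` in the real plane spanned by the "good" state `u` and the "bad" state
`v`. The angle is measured from `v` towards `u`, so that `sin φ` is the amplitude of `u`. -/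
noncomputable def superposition (u v : E) (φ : ℝ) : E :=
  (Real.sin φ : 𝕜) • u + (Real.cos φ : 𝕜) • v

theorem two_mul_cos_smul_superposition_sub (u v : E) (θ φ : ℝ) :
    (2 * (Real.cos (θ - φ) : 𝕜)) • superposition 𝕜 u v θ - superposition 𝕜 u v φ =
      superposition 𝕜 u v (2 * θ - φ) := by
  have sin_reflect : Real.sin (2 * θ - φ) = 2 * Real.cos (θ - φ) * Real.sin θ - Real.sin φ := by
    have product_to_sum := Real.two_mul_sin_mul_cos θ (θ - φ)
    rw [sub_sub_cancel, ← add_sub_assoc, ← two_mul] at product_to_sum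
    linear_combination -product_to_sum
  have cos_reflect : Real.cos (2 * θ - φ) = 2 * Real.cos (θ - φ) * Real.cos θ - Real.cos φ := by
    have product_to_sum := Real.two_mul_cos_mul_cos θ (θ - φ)
    rw [sub_sub_cancel, ← add_sub_assoc, ← two_mul] at product_to_sum
    linear_combination -product_to_sum
  simp only [superposition, sin_reflect, cos_reflect]
  push_cast
  module

theorem semiconj_superposition_neg {u v : E} {S : E →ₗ[𝕜] E} (hSu : S u = -u)
    (hSv : S v = v) : Function.Semiconj (superposition 𝕜 u v) (fun φ ↦ -φ) S := fun φ ↦ by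
  simp [superposition, hSu, hSv]

end Module

variable [NormedAddCommGroup E] [InnerProductSpace 𝕜 E] {u v : E}

theorem inner_superposition_superposition (hu : ‖u‖ = 1) (hv : ‖v‖ = 1) (huv : inner 𝕜 u v = 0)
    (θ φ : ℝ) :
    inner 𝕜 (superposition 𝕜 u v θ) (superposition 𝕜 u v φ) = (Real.cos (θ - φ) : 𝕜) := by
  have hvu : inner 𝕜 v u = 0 := inner_eq_zero_symm.mp huv
  simp only [superposition, inner_add_left, inner_add_right, inner_smul_left, inner_smul_right,
    inner_self_eq_norm_sq_to_K, hu, hv, huv, hvu, RCLike.conj_ofReal, Real.cos_sub]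
  push_cast
  ring

theorem semiconj_superposition_reflection (hu : ‖u‖ = 1) (hv : ‖v‖ = 1) (huv : inner 𝕜 u v = 0)
    {θ : ℝ} {R : E → E}
    (hR : ∀ x, R x = (2 * inner 𝕜 (superposition 𝕜 u v θ) x) • superposition 𝕜 u v θ - x) :
    Function.Semiconj (superposition 𝕜 u v) (fun φ ↦ 2 * θ - φ) R := fun φ ↦ by
  rw [hR, inner_superposition_superposition hu hv huv, two_mul_cos_smul_superposition_sub]

theorem grover_iterate_rotation_general (hu : ‖u‖ = 1) (hv : ‖v‖ = 1) (huv : inner 𝕜 u v = 0)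
    (θ φ : ℝ) (R : E → E)
    (hR : ∀ x, R x = (2 * inner 𝕜 (superposition 𝕜 u v θ) x) • superposition 𝕜 u v θ - x)
    (S : E →ₗ[𝕜] E) (hSu : S u = -u) (hSv : S v = v) (k : ℕ) :
    (R ∘ S)^[k] (superposition 𝕜 u v φ) = superposition 𝕜 u v (φ + k * (2 * θ)) := by
  have rotation : Function.Semiconj (superposition 𝕜 u v) (· + 2 * θ) (R ∘ S) := by
    simpa only [Function.comp_def, sub_neg_eq_add, add_comm] using
      (semiconj_superposition_reflection hu hv huv hR).comp_right
        (semiconj_superposition_neg hSu hSv)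
  rw [← (rotation.iterate_right k).eq, add_right_iterate_apply, nsmul_eq_mul]

end Superposition

/-- Equation (9) of the paper in abstract form: `k` iterations of the Grover operator
`G = (2|h⟩⟨h| − I) ∘ S` rotate the initial state `h = sin θ • u + cos θ • v` to
`cos((2k+1)θ) • v + sin((2k+1)θ) • u`. -/
theorem grover_iterate_rotation
    {E : Type*} [NormedAddCommGroup E] [InnerProductSpace ℂ E]
    (u v : E) (hu : ‖u‖ = 1) (hv : ‖v‖ = 1) (huv : ⟪u, v⟫ = 0)
    (θ : ℝ) (h : E)
    (hh : h = (Real.sin θ : ℂ) • u + (Real.cos θ : ℂ) • v)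
    (R : E → E) (hR : ∀ x, R x = (2 * ⟪h, x⟫) • h - x)
    (S : E →ₗ[ℂ] E) (hSu : S u = -u) (hSv : S v = v) :
    ∀ k : ℕ,
      (R ∘ ⇑S)^[k] h =
        (Real.cos ((2 * k + 1) * θ) : ℂ) • v + (Real.sin ((2 * k + 1) * θ) : ℂ) • u := by
  intro k
  subst hh
  rw [add_comm (_ • v), show (2 * k + 1) * θ = θ + k * (2 * θ) by ring]
  exact grover_iterate_rotation_general hu hv huv θ θ R hR S hSu hSv k
end

section
/- Let n ≥ 1, N = 2^n, and f : (Fin n → Bool) → Bool with A = {x | f x = true}, B = {x | f x = false}, a = |A|, b = |B|, and 1 ≤ a < N. In EuclideanSpace ℂ (Fin n → Bool) with standard basis vectors e_x, define uA = (1/√a) Σ_{x∈A} e_x, uB = (1/√b) Σ_{x∈B} e_x, h = (1/√N) Σ_x e_x, let Z_f be the linear map with Z_f e_x = (if f x then −1 else 1) • e_x, let θ = arcsin(√(a/N)), and let G : EuclideanSpace ℂ (Fin n → Bool) →ₗ[ℂ] EuclideanSpace ℂ (Fin n → Bool) be G x = 2⟪h, Z_f x⟫ • h − Z_f x. Then for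 every natural number k, G^k h = cos((2k+1)θ) • uB + sin((2k+1)θ) • uA. -/
open scoped ComplexInnerProductSpace
open Finset

/-!
In the real plane spanned by the orthonormal vectors `uB` and `uA`, the oracle `Z_f` is the
reflection `φ ↦ -φ` of the polar angle across the `uB`-axis, and `2|h⟩⟨h| - I` is the reflection
`φ ↦ 2θ - φ` across the line at angle `θ` through `h`. Their composition `G` is therefore the
rotation by `2θ`, and it moves `h` from angle `θ` to angle `(2k + 1)θ` in `k` steps.
-/

section Plane

variable (𝕜 : Type*) {E : Type*} [RCLike 𝕜]

/-- The vector at polar angle `φ` in the real plane spanned by `u` (angle `0`) and `v`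
(angle `π / 2`), inside a vector space over `𝕜`, which is `ℝ` or `ℂ`. -/
noncomputable def angleVector [AddCommGroup E] [Module 𝕜 E] (u v : E) (φ : ℝ) : E :=
  (Real.cos φ : 𝕜) • u + (Real.sin φ : 𝕜) • v

variable {𝕜}

theorem map_angleVector_eq_angleVector_neg [AddCommGroup E] [Module 𝕜 E] {u v : E}
    {Z : Module.End 𝕜 E} (hu : Z u = u) (hv : Z v = -v) (φ : ℝ) :
    Z (angleVector 𝕜 u v φ) = angleVector 𝕜 u v (-φ) := by
  simp [angleVector, hu, hv]

variable [NormedAddCommGroup E] [InnerProductSpace 𝕜 E] {u v : E}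

theorem inner_angleVector (hu : ‖u‖ = 1) (hv : ‖v‖ = 1) (huv : inner 𝕜 u v = 0) (θ φ : ℝ) :
    inner 𝕜 (angleVector 𝕜 u v θ) (angleVector 𝕜 u v φ) = (Real.cos (θ - φ) : 𝕜) := by
  have hvu : inner 𝕜 v u = 0 := inner_eq_zero_symm.mp huv
  simp only [angleVector, inner_add_left, inner_add_right, inner_smul_left, inner_smul_right,
    RCLike.conj_ofReal, inner_self_eq_norm_sq_to_K, hu, hv, huv, hvu, Real.cos_sub]
  push_cast
  ring

theorem two_mul_inner_smul_angleVector_sub (hu : ‖u‖ = 1) (hv : ‖v‖ = 1) (huv : inner 𝕜 u v = 0)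
    (θ φ : ℝ) :
    (2 * inner 𝕜 (angleVector 𝕜 u v θ) (angleVector 𝕜 u v φ)) • angleVector 𝕜 u v θ -
      angleVector 𝕜 u v φ = angleVector 𝕜 u v (2 * θ - φ) := by
  have hcos : Real.cos (2 * θ - φ) = 2 * Real.cos (θ - φ) * Real.cos θ - Real.cos φ := by
    rw [Real.two_mul_cos_mul_cos, sub_sub_cancel_left, Real.cos_neg]
    ring_nf
  have hsin : Real.sin (2 * θ - φ) = 2 * Real.cos (θ - φ) * Real.sin θ - Real.sin φ := by
    rw [mul_right_comm, Real.two_mul_sin_mul_cos]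
    ring_nf
  rw [inner_angleVector hu hv huv]
  simp only [angleVector, hcos, hsin]
  push_cast
  module

theorem pow_apply_angleVector_of_reflections (hu : ‖u‖ = 1) (hv : ‖v‖ = 1) (huv : inner 𝕜 u v = 0)
    {Z G : Module.End 𝕜 E} (hZu : Z u = u) (hZv : Z v = -v) {θ : ℝ}
    (hG : ∀ x, G x =
      (2 * inner 𝕜 (angleVector 𝕜 u v θ) (Z x)) • angleVector 𝕜 u v θ - Z x) (k : ℕ) :
    (G ^ k) (angleVector 𝕜 u v θ) = angleVector 𝕜 u v ((2 * k + 1) * θ) := by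
  have hrot (φ : ℝ) : G (angleVector 𝕜 u v φ) = angleVector 𝕜 u v (2 * θ + φ) := by
    rw [hG, map_angleVector_eq_angleVector_neg hZu hZv,
      two_mul_inner_smul_angleVector_sub hu hv huv, sub_neg_eq_add]
  induction k with
  | zero => simp
  | succ k ih =>
    rw [pow_succ', Module.End.mul_apply, ih, hrot]
    push_cast
    ring_nf

end Plane

section UniformSuperposition

variable (𝕜 : Type*) {ι : Type*} [RCLike 𝕜] [DecidableEq ι]

/-- The normalized sum of the standard basis vectors indexed by `s`: the quantum state that is
uniform on `s`. It is a unit vector for nonempty `s`, and `0` for `s = ∅`. -/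
noncomputable def uniformSuperposition (s : Finset ι) : EuclideanSpace 𝕜 ι :=
  ((1 / √(#s : ℝ) : ℝ) : 𝕜) • ∑ x ∈ s, EuclideanSpace.single x (1 : 𝕜)

variable {𝕜}

theorem sqrt_card_smul_uniformSuperposition (s : Finset ι) :
    (√(#s : ℝ) : 𝕜) • uniformSuperposition 𝕜 s = ∑ x ∈ s, EuclideanSpace.single x (1 : 𝕜) := by
  obtain rfl | hs := s.eq_empty_or_nonempty
  · simp
  · have hcard : √(#s : ℝ) ≠ 0 := by simpa using hs.ne_empty
    rw [uniformSuperposition, smul_smul, ← RCLike.ofReal_mul, mul_one_div_cancel hcard,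
      RCLike.ofReal_one, one_smul]

theorem map_uniformSuperposition_eq_smul {Z : Module.End 𝕜 (EuclideanSpace 𝕜 ι)}
    {s : Finset ι} {c : 𝕜}
    (hZ : ∀ x ∈ s, Z (EuclideanSpace.single x 1) = c • EuclideanSpace.single x 1) :
    Z (uniformSuperposition 𝕜 s) = c • uniformSuperposition 𝕜 s := by
  rw [uniformSuperposition, map_smul, map_sum, sum_congr rfl hZ, ← smul_sum, smul_comm]

theorem uniformSuperposition_union {s t : Finset ι} (hst : Disjoint s t) :
    uniformSuperposition 𝕜 (s ∪ t) =
      (√(#s / #(s ∪ t) : ℝ) : 𝕜) • uniformSuperposition 𝕜 s +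
        (√(#t / #(s ∪ t) : ℝ) : 𝕜) • uniformSuperposition 𝕜 t := by
  rw [uniformSuperposition, sum_union hst, ← sqrt_card_smul_uniformSuperposition s,
    ← sqrt_card_smul_uniformSuperposition t, Real.sqrt_div (Nat.cast_nonneg _),
    Real.sqrt_div (Nat.cast_nonneg _)]
  push_cast
  module

variable [Fintype ι]

theorem inner_sum_single_sum_single (s t : Finset ι) :
    inner 𝕜 (∑ x ∈ s, EuclideanSpace.single x (1 : 𝕜)) (∑ x ∈ t, EuclideanSpace.single x (1 : 𝕜)) =
      (#(s ∩ t) : 𝕜) := by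
  simp [sum_inner, inner_sum, EuclideanSpace.inner_single_left, inter_comm]

theorem inner_uniformSuperposition (s t : Finset ι) :
    inner 𝕜 (uniformSuperposition 𝕜 s) (uniformSuperposition 𝕜 t) =
      ((#(s ∩ t) / (√(#s : ℝ) * √(#t : ℝ)) : ℝ) : 𝕜) := by
  rw [uniformSuperposition, uniformSuperposition, inner_smul_left, inner_smul_right,
    inner_sum_single_sum_single, RCLike.conj_ofReal]
  push_cast
  ring

theorem norm_uniformSuperposition {s : Finset ι} (hs : s.Nonempty) :
    ‖uniformSuperposition 𝕜 s‖ = 1 := by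
  have hcard : (#s : ℝ) ≠ 0 := by simpa using hs.ne_empty
  rw [norm_eq_sqrt_re_inner (𝕜 := 𝕜), inner_uniformSuperposition, inter_self, RCLike.ofReal_re,
    Real.mul_self_sqrt (Nat.cast_nonneg _), div_self hcard, Real.sqrt_one]

theorem inner_uniformSuperposition_of_disjoint {s t : Finset ι} (hst : Disjoint s t) :
    inner 𝕜 (uniformSuperposition 𝕜 s) (uniformSuperposition 𝕜 t) = 0 := by
  simp [inner_uniformSuperposition, disjoint_iff_inter_eq_empty.mp hst]

theorem uniformSuperposition_univ_eq_angleVector [Nonempty ι] {A B : Finset ι}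
    (hAB : IsCompl A B) :
    uniformSuperposition 𝕜 univ =
      angleVector 𝕜 (uniformSuperposition 𝕜 B) (uniformSuperposition 𝕜 A)
        (Real.arcsin √(#A / Fintype.card ι)) := by
  have hunion : A ∪ B = univ := hAB.sup_eq_top
  have hcard : (#A : ℝ) + #B = Fintype.card ι := by
    rw [← card_univ, ← hunion, card_union_of_disjoint hAB.disjoint, Nat.cast_add]
  have hpos : (0 : ℝ) < Fintype.card ι := Nat.cast_pos.mpr Fintype.card_pos
  have hsin : Real.sin (Real.arcsin √(#A / Fintype.card ι)) = √(#A / Fintype.card ι) := by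
    refine Real.sin_arcsin (by linarith [Real.sqrt_nonneg ((#A : ℝ) / Fintype.card ι)]) ?_
    rw [Real.sqrt_le_one, div_le_one hpos]
    exact_mod_cast card_le_univ A
  have hcos : Real.cos (Real.arcsin √(#A / Fintype.card ι)) = √(#B / Fintype.card ι) := by
    rw [Real.cos_arcsin, Real.sq_sqrt (by positivity), one_sub_div hpos.ne', ← hcard,
      add_sub_cancel_left]
  rw [angleVector, hsin, hcos, ← hunion, uniformSuperposition_union hAB.disjoint, hunion,
    card_univ, add_comm]

end UniformSuperposition

theorem isCompl_filter_eq_true_filter_eq_false {ι : Type*} [Fintype ι] (f : ι → Bool) :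
    IsCompl (univ.filter fun x => f x = true) (univ.filter fun x => f x = false) := by
  classical
  simpa only [compl_filter, Bool.not_eq_true] using
    isCompl_compl (x := univ.filter fun x => f x = true)

theorem grover_iterate_formula_general {𝕜 ι : Type*} [RCLike 𝕜] [Fintype ι] [DecidableEq ι]
    {f : ι → Bool} (htrue : ∃ x, f x = true) (hfalse : ∃ x, f x = false)
    {Z G : Module.End 𝕜 (EuclideanSpace 𝕜 ι)}
    (hZ : ∀ x, Z (EuclideanSpace.single x 1) =
      (if f x then (-1 : 𝕜) else 1) • EuclideanSpace.single x 1)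
    (hG : ∀ x, G x =
      (2 * inner 𝕜 (uniformSuperposition 𝕜 univ) (Z x)) • uniformSuperposition 𝕜 univ - Z x)
    {θ : ℝ} (hθ : θ = Real.arcsin √(#{x | f x = true} / Fintype.card ι)) (k : ℕ) :
    (G ^ k) (uniformSuperposition 𝕜 univ) =
      (Real.cos ((2 * k + 1) * θ) : 𝕜) • uniformSuperposition 𝕜 {x | f x = false} +
        (Real.sin ((2 * k + 1) * θ) : 𝕜) • uniformSuperposition 𝕜 {x | f x = true} := by
  have : Nonempty ι := htrue.nonempty
  have hcompl := isCompl_filter_eq_true_filter_eq_false f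
  have huniv := uniformSuperposition_univ_eq_angleVector (𝕜 := 𝕜) hcompl
  rw [← hθ] at huniv
  rw [huniv] at hG ⊢
  refine pow_apply_angleVector_of_reflections (norm_uniformSuperposition ?_)
    (norm_uniformSuperposition ?_) (inner_uniformSuperposition_of_disjoint hcompl.disjoint.symm)
    ((map_uniformSuperposition_eq_smul fun x hx => ?_).trans (one_smul 𝕜 _))
    ((map_uniformSuperposition_eq_smul fun x hx => ?_).trans (neg_one_smul 𝕜 _)) hG k
  · simpa [filter_nonempty_iff] using hfalse
  · simpa [filter_nonempty_iff] using htrue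
  · rw [hZ, (mem_filter.mp hx).2, if_neg Bool.false_ne_true]
  · rw [hZ, if_pos (mem_filter.mp hx).2]

/-- Equation (9) of the paper: `k` iterations of the Grover iterate
`G = (2|h⟩⟨h| − I) Z_f` applied to the uniform superposition `h` yield
`cos((2k+1)θ) • uB + sin((2k+1)θ) • uA`, where `sin θ = √(a/N)`. -/
theorem grover_iterate_formula
    (n : ℕ) (hn : 1 ≤ n) (N : ℕ) (hN : N = 2 ^ n)
    (f : (Fin n → Bool) → Bool)
    (A B : Finset (Fin n → Bool))
    (hA : A = Finset.univ.filter fun x => f x = true)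
    (hB : B = Finset.univ.filter fun x => f x = false)
    (a b : ℕ) (ha : a = A.card) (hb : b = B.card)
    (ha1 : 1 ≤ a) (haN : a < N)
    (uA uB h : EuclideanSpace ℂ (Fin n → Bool))
    (huA : uA = ((1 / Real.sqrt a : ℝ) : ℂ) • ∑ x ∈ A, EuclideanSpace.single x (1 : ℂ))
    (huB : uB = ((1 / Real.sqrt b : ℝ) : ℂ) • ∑ x ∈ B, EuclideanSpace.single x (1 : ℂ))
    (hh : h = ((1 / Real.sqrt N : ℝ) : ℂ) •
      ∑ x : Fin n → Bool, EuclideanSpace.single x (1 : ℂ))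
    (Zf : EuclideanSpace ℂ (Fin n → Bool) →ₗ[ℂ] EuclideanSpace ℂ (Fin n → Bool))
    (hZf : ∀ x : Fin n → Bool,
      Zf (EuclideanSpace.single x (1 : ℂ)) =
        (if f x then (-1 : ℂ) else 1) • EuclideanSpace.single x (1 : ℂ))
    (θ : ℝ) (hθ : θ = Real.arcsin (Real.sqrt ((a : ℝ) / N)))
    (G : EuclideanSpace ℂ (Fin n → Bool) →ₗ[ℂ] EuclideanSpace ℂ (Fin n → Bool))
    (hG : ∀ x, G x = (2 * ⟪h, Zf x⟫) • h - Zf x) :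
    ∀ k : ℕ,
      (G ^ k) h = (Real.cos ((2 * k + 1) * θ) : ℂ) • uB +
        (Real.sin ((2 * k + 1) * θ) : ℂ) • uA := by
  obtain rfl : N = Fintype.card (Fin n → Bool) := by simp [hN]
  subst ha hb hA hB huA huB hh
  exact grover_iterate_formula_general (by simpa [filter_nonempty_iff] using ha1)
    (by simpa [filter_eq_self] using (card_lt_iff_ne_univ _).mp haN) hZf hG hθ
end

section
/- Let n ≥ 1, N = 2^n, and f : (Fin n → Bool) → Bool with A = {x | f x = true}, a = |A|, and 1 ≤ a < N. In EuclideanSpace ℂ (Fin n → Bool) with standard basis vectors e_x, define h = (1/√N) Σ_x e_x, let Z_f be the linear map with Z_f e_x = (if f x then −1 else 1) • e_x, let θ = arcsin(√(a/N)), and let G be the linear map G x = 2⟪h, Z_f x⟫ • h − Z_f x. Then for every natural number k, Σ_{x∈A} ‖⟪e_x, G^k h⟩‖² = sin²((2k+1)θ); in particular, with k = ⌊(π/4)√(N/a)⌋, the probability that measuring G^k h in the computational basis yields a solution of f equals sin²((2⌊(π/4)√(N/a)⌋ + 1)·arcsin(√(a/N))). -/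
open scoped ComplexInnerProductSpace
open Finset

/-!
Split `h = g + b` into its components along the solutions and the non-solutions, so that `g` and
`b` are orthogonal with `‖g‖ = |sin θ|` and `‖b‖ = |cos θ|`. The phase oracle is the reflection
`g ↦ -g`, `b ↦ b`, and `2|h⟩⟨h| - I` is the reflection fixing `h`; their product rotates the plane
of `g` and `b` by `2θ`. Keeping `g` and `b` unnormalised and writing `G ^ k h = α • g + β • b`, the
rotation reads `sin θ * α = sin ((2k+1)θ)`, `cos θ * β = cos ((2k+1)θ)`, which also covers the
degenerate cases `g = 0` and `b = 0`.
-/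

theorem sin_sq_arcsin_sqrt {p : ℝ} (h0 : 0 ≤ p) (h1 : p ≤ 1) :
    Real.sin (Real.arcsin √p) ^ 2 = p := by
  rw [Real.sin_arcsin (by linarith [Real.sqrt_nonneg p]) (Real.sqrt_le_one.mpr h1),
    Real.sq_sqrt h0]

section AmplitudeAmplification

variable {𝕜 E : Type*} [RCLike 𝕜] [NormedAddCommGroup E] [InnerProductSpace 𝕜 E]

/-- The Grover operator `(2|h⟩⟨h| - I) Z` with initial state `h` and oracle `Z`, on an arbitrary
inner product space. The vector `h` is not normalised: `2|h⟩⟨h| - I` is a reflection only when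
`‖h‖ = 1` or `h = 0`. -/
noncomputable def groverOperator (h : E) (Z : E →ₗ[𝕜] E) : E →ₗ[𝕜] E :=
  ((2 : 𝕜) • (innerₛₗ 𝕜 h).smulRight h - LinearMap.id) ∘ₗ Z

theorem groverOperator_apply (h : E) (Z : E →ₗ[𝕜] E) (v : E) :
    groverOperator h Z v = (2 * inner 𝕜 h (Z v)) • h - Z v := by
  simp [groverOperator, mul_smul]

variable {g b : E} {Z : E →ₗ[𝕜] E} {θ : ℝ}

theorem inner_add_smul_sub_smul (hgb : inner 𝕜 g b = 0) (α β : 𝕜) :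
    inner 𝕜 (g + b) (β • b - α • g) = β * (‖b‖ : 𝕜) ^ 2 - α * (‖g‖ : 𝕜) ^ 2 := by
  have hbg : inner 𝕜 b g = 0 := inner_eq_zero_symm.mp hgb
  simp [inner_add_left, inner_sub_right, inner_smul_right, hgb, hbg, inner_self_eq_norm_sq_to_K]

theorem groverOperator_smul_add_smul (hgb : inner 𝕜 g b = 0)
    (hg : ‖g‖ ^ 2 = Real.sin θ ^ 2) (hb : ‖b‖ ^ 2 = Real.cos θ ^ 2)
    (hZg : Z g = -g) (hZb : Z b = b) (α β : 𝕜) :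
    groverOperator (g + b) Z (α • g + β • b) =
      ((Real.cos (2 * θ) : 𝕜) * α + 2 * (Real.cos θ : 𝕜) ^ 2 * β) • g +
        ((Real.cos (2 * θ) : 𝕜) * β - 2 * (Real.sin θ : 𝕜) ^ 2 * α) • b := by
  have hZ : Z (α • g + β • b) = β • b - α • g := by
    rw [map_add, map_smul, map_smul, hZg, hZb, smul_neg, neg_add_eq_sub]
  have hinner : inner 𝕜 (g + b) (β • b - α • g) =
      β * (Real.cos θ : 𝕜) ^ 2 - α * (Real.sin θ : 𝕜) ^ 2 := by
    rw [inner_add_smul_sub_smul hgb, ← RCLike.ofReal_pow, ← RCLike.ofReal_pow, hb, hg,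
      RCLike.ofReal_pow, RCLike.ofReal_pow]
  have hcos : (Real.cos (2 * θ) : 𝕜) = 2 * (Real.cos θ : 𝕜) ^ 2 - 1 :=
    mod_cast congrArg (RCLike.ofReal (K := 𝕜)) (Real.cos_two_mul θ)
  have hcos' : (Real.cos (2 * θ) : 𝕜) = 1 - 2 * (Real.sin θ : 𝕜) ^ 2 :=
    mod_cast congrArg (RCLike.ofReal (K := 𝕜)) (Real.cos_two_mul_eq_one_sub θ)
  calc groverOperator (g + b) Z (α • g + β • b)
    _ = (2 * (β * (Real.cos θ : 𝕜) ^ 2 - α * (Real.sin θ : 𝕜) ^ 2)) • (g + b) -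
          (β • b - α • g) := by rw [groverOperator_apply, hZ, hinner]
    _ = ((1 - 2 * (Real.sin θ : 𝕜) ^ 2) * α + 2 * (Real.cos θ : 𝕜) ^ 2 * β) • g +
          ((2 * (Real.cos θ : 𝕜) ^ 2 - 1) * β - 2 * (Real.sin θ : 𝕜) ^ 2 * α) • b := by module
    _ = _ := by rw [← hcos, ← hcos']

theorem exists_groverOperator_pow_eq_smul_add_smul (hgb : inner 𝕜 g b = 0)
    (hg : ‖g‖ ^ 2 = Real.sin θ ^ 2) (hb : ‖b‖ ^ 2 = Real.cos θ ^ 2)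
    (hZg : Z g = -g) (hZb : Z b = b) (k : ℕ) :
    ∃ α β : ℝ, (groverOperator (g + b) Z ^ k) (g + b) = (α : 𝕜) • g + (β : 𝕜) • b ∧
      Real.sin θ * α = Real.sin ((2 * k + 1) * θ) ∧
      Real.cos θ * β = Real.cos ((2 * k + 1) * θ) := by
  induction k with
  | zero => exact ⟨1, 1, by simp⟩
  | succ k ih =>
    obtain ⟨α, β, hpow, hα, hβ⟩ := ih
    have hangle : (2 * ((k + 1 : ℕ) : ℝ) + 1) * θ = (2 * k + 1) * θ + 2 * θ := by
      push_cast
      ring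
    refine ⟨Real.cos (2 * θ) * α + 2 * Real.cos θ ^ 2 * β,
      Real.cos (2 * θ) * β - 2 * Real.sin θ ^ 2 * α, ?_, ?_, ?_⟩
    · rw [pow_succ', Module.End.mul_apply, hpow,
        groverOperator_smul_add_smul hgb hg hb hZg hZb]
      push_cast
      rfl
    · rw [hangle, Real.sin_add, ← hα, ← hβ, Real.sin_two_mul]
      ring
    · rw [hangle, Real.cos_add, ← hα, ← hβ, Real.sin_two_mul]
      ring

end AmplitudeAmplification

section UniformSuperposition

variable {𝕜 ι : Type*} [RCLike 𝕜] [Fintype ι] [DecidableEq ι]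

variable (𝕜) in
/-- The component of the uniform superposition along the basis states in `A`. It carries the
normalising factor of the whole space, so its squared norm is the density of `A`, and for `A = univ`
it is the uniform superposition itself. -/
noncomputable def uniformComponent (A : Finset ι) : EuclideanSpace 𝕜 ι :=
  ((1 / √(Fintype.card ι) : ℝ) : 𝕜) • ∑ x ∈ A, EuclideanSpace.single x (1 : 𝕜)

theorem uniformComponent_apply (A : Finset ι) (x : ι) :
    uniformComponent 𝕜 A x = if x ∈ A then ((1 / √(Fintype.card ι) : ℝ) : 𝕜) else 0 := by
  simp [uniformComponent, Pi.single_apply]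

theorem uniformComponent_add_compl (A : Finset ι) :
    uniformComponent 𝕜 A + uniformComponent 𝕜 Aᶜ = uniformComponent 𝕜 univ := by
  simp only [uniformComponent, ← smul_add, sum_add_sum_compl]

theorem inner_uniformComponent_compl (A : Finset ι) :
    inner 𝕜 (uniformComponent 𝕜 A) (uniformComponent 𝕜 Aᶜ) = 0 := by
  rw [PiLp.inner_apply]
  refine sum_eq_zero fun x _ => ?_
  by_cases hx : x ∈ A <;> simp [uniformComponent_apply, hx]

theorem sum_norm_sq_uniformComponent (A : Finset ι) :
    ∑ x ∈ A, ‖uniformComponent 𝕜 A x‖ ^ 2 = #A / Fintype.card ι := by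
  have hentry : ∀ x ∈ A, ‖uniformComponent 𝕜 A x‖ ^ 2 = 1 / Fintype.card ι := fun x hx => by
    rw [uniformComponent_apply, if_pos hx, RCLike.norm_ofReal, sq_abs, div_pow, one_pow,
      Real.sq_sqrt (Nat.cast_nonneg _)]
  rw [sum_congr rfl hentry, sum_const, nsmul_eq_mul, mul_one_div]

theorem norm_sq_uniformComponent (A : Finset ι) :
    ‖uniformComponent 𝕜 A‖ ^ 2 = #A / Fintype.card ι := by
  rw [EuclideanSpace.norm_sq_eq, ← sum_norm_sq_uniformComponent (𝕜 := 𝕜)]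
  refine (sum_subset (subset_univ A) fun x _ hx => ?_).symm
  simp [uniformComponent_apply, hx]

theorem map_uniformComponent_of_forall_single {Z : EuclideanSpace 𝕜 ι →ₗ[𝕜] EuclideanSpace 𝕜 ι}
    {A : Finset ι} {c : 𝕜}
    (hZ : ∀ x ∈ A, Z (EuclideanSpace.single x 1) = c • EuclideanSpace.single x 1) :
    Z (uniformComponent 𝕜 A) = c • uniformComponent 𝕜 A := by
  rw [uniformComponent, map_smul, map_sum, sum_congr rfl hZ, ← smul_sum, smul_comm]

theorem sum_norm_sq_inner_single_smul_add_smul_compl (A : Finset ι) (α β : 𝕜) :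
    ∑ x ∈ A, ‖inner 𝕜 (EuclideanSpace.single x (1 : 𝕜))
        (α • uniformComponent 𝕜 A + β • uniformComponent 𝕜 Aᶜ)‖ ^ 2 =
      ‖α‖ ^ 2 * (#A / Fintype.card ι) := by
  rw [← sum_norm_sq_uniformComponent (𝕜 := 𝕜), mul_sum]
  refine sum_congr rfl fun x hx => ?_
  have hcompl : uniformComponent 𝕜 Aᶜ x = 0 := by simp [uniformComponent_apply, hx]
  simp [EuclideanSpace.inner_single_left, hcompl, mul_pow]

theorem card_compl_div_card [Nonempty ι] (A : Finset ι) :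
    (#Aᶜ / Fintype.card ι : ℝ) = 1 - #A / Fintype.card ι := by
  rw [card_compl, Nat.cast_sub (card_le_univ A)]
  field_simp

theorem grover_success_probability_general [Nonempty ι] (A : Finset ι) (h : EuclideanSpace 𝕜 ι)
    (hh : h = ((1 / √(Fintype.card ι) : ℝ) : 𝕜) • ∑ x, EuclideanSpace.single x (1 : 𝕜))
    (Z : EuclideanSpace 𝕜 ι →ₗ[𝕜] EuclideanSpace 𝕜 ι)
    (hZ : ∀ x, Z (EuclideanSpace.single x 1) =
      (if x ∈ A then (-1 : 𝕜) else 1) • EuclideanSpace.single x 1)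
    (G : EuclideanSpace 𝕜 ι →ₗ[𝕜] EuclideanSpace 𝕜 ι)
    (hG : ∀ v, G v = (2 * inner 𝕜 h (Z v)) • h - Z v) (k : ℕ) :
    ∑ x ∈ A, ‖inner 𝕜 (EuclideanSpace.single x (1 : 𝕜)) ((G ^ k) h)‖ ^ 2 =
      Real.sin ((2 * k + 1) * Real.arcsin √(#A / Fintype.card ι)) ^ 2 := by
  set θ := Real.arcsin √(#A / Fintype.card ι)
  have hsin : Real.sin θ ^ 2 = #A / Fintype.card ι :=
    sin_sq_arcsin_sqrt (by positivity)
      (div_le_one_of_le₀ (mod_cast card_le_univ A) (Nat.cast_nonneg _))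
  have hcos : Real.cos θ ^ 2 = #Aᶜ / Fintype.card ι := by
    rw [Real.cos_sq', hsin, card_compl_div_card]
  have hsplit : h = uniformComponent 𝕜 A + uniformComponent 𝕜 Aᶜ :=
    hh.trans (uniformComponent_add_compl A).symm
  have hGrover : G = groverOperator h Z :=
    LinearMap.ext fun v => (hG v).trans (groverOperator_apply h Z v).symm
  have hZgood : Z (uniformComponent 𝕜 A) = -uniformComponent 𝕜 A := by
    rw [map_uniformComponent_of_forall_single fun x hx => by rw [hZ, if_pos hx], neg_one_smul]
  have hZbad : Z (uniformComponent 𝕜 Aᶜ) = uniformComponent 𝕜 Aᶜ := by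
    rw [map_uniformComponent_of_forall_single fun x hx => by rw [hZ, if_neg (mem_compl.mp hx)],
      one_smul]
  obtain ⟨α, β, hpow, hα, -⟩ := exists_groverOperator_pow_eq_smul_add_smul
    (inner_uniformComponent_compl A)
    ((norm_sq_uniformComponent A).trans hsin.symm)
    ((norm_sq_uniformComponent Aᶜ).trans hcos.symm)
    hZgood hZbad k
  rw [hGrover, hsplit, hpow, sum_norm_sq_inner_single_smul_add_smul_compl, ← hsin, ← hα,
    RCLike.norm_ofReal, sq_abs, mul_pow, mul_comm]

end UniformSuperposition

/-- Equation (10) of the paper: after `k` Grover iterations the probability of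
measuring a solution is `sin²((2k+1)θ)`; in particular, with
`k = ⌊(π/4)√(N/a)⌋` iterations the success probability equals
`sin²((2⌊(π/4)√(N/a)⌋+1)·arcsin(√(a/N)))`. -/
theorem grover_success_probability
    (n : ℕ) (hn : 1 ≤ n) (N : ℕ) (hN : N = 2 ^ n)
    (f : (Fin n → Bool) → Bool)
    (A : Finset (Fin n → Bool))
    (hA : A = Finset.univ.filter fun x => f x = true)
    (a : ℕ) (ha : a = A.card) (ha1 : 1 ≤ a) (haN : a < N)
    (h : EuclideanSpace ℂ (Fin n → Bool))
    (hh : h = ((1 / Real.sqrt N : ℝ) : ℂ) •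
      ∑ x : Fin n → Bool, EuclideanSpace.single x (1 : ℂ))
    (Zf : EuclideanSpace ℂ (Fin n → Bool) →ₗ[ℂ] EuclideanSpace ℂ (Fin n → Bool))
    (hZf : ∀ x : Fin n → Bool,
      Zf (EuclideanSpace.single x (1 : ℂ)) =
        (if f x then (-1 : ℂ) else 1) • EuclideanSpace.single x (1 : ℂ))
    (θ : ℝ) (hθ : θ = Real.arcsin (Real.sqrt ((a : ℝ) / N)))
    (G : EuclideanSpace ℂ (Fin n → Bool) →ₗ[ℂ] EuclideanSpace ℂ (Fin n → Bool))
    (hG : ∀ x, G x = (2 * ⟪h, Zf x⟫) • h - Zf x) :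
    (∀ k : ℕ,
      ∑ x ∈ A, ‖⟪EuclideanSpace.single x (1 : ℂ), (G ^ k) h⟫‖ ^ 2 =
        Real.sin ((2 * k + 1) * θ) ^ 2) ∧
    (∑ x ∈ A,
        ‖⟪EuclideanSpace.single x (1 : ℂ),
            (G ^ ⌊(Real.pi / 4) * Real.sqrt ((N : ℝ) / a)⌋₊) h⟫‖ ^ 2 =
      Real.sin ((2 * (⌊(Real.pi / 4) * Real.sqrt ((N : ℝ) / a)⌋₊ : ℝ) + 1) *
        Real.arcsin (Real.sqrt ((a : ℝ) / N))) ^ 2) := by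
  have hcard : N = Fintype.card (Fin n → Bool) := by simp [hN]
  subst hcard ha hθ
  have hsuccess := grover_success_probability_general A h hh Zf (by simpa [hA] using hZf) G hG
  exact ⟨hsuccess, hsuccess _⟩
end

section
/- For every real number θ with 0 < θ ≤ π/2, letting k = ⌊π/(4θ)⌋, one has sin²((2k+1)θ) ≥ cos²θ. In particular, if sin θ = √(a/N) for natural numbers 1 ≤ a ≤ N, then the success probability sin²((2⌊π/(4θ)⌋+1)θ) of Grover's algorithm is at least 1 − a/N. -/
-- `⌊x / (2 * θ)⌋₊` is the index of the interval `[2kθ, 2(k+1)θ)` containing `x`, and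
-- `(2k+1)θ` is the midpoint of that interval.
theorem abs_two_mul_floor_add_one_mul_sub_le {K : Type*} [Field K] [LinearOrder K]
    [IsStrictOrderedRing K] [FloorSemiring K] {θ x : K} (hθ : 0 < θ) (hx : 0 ≤ x) :
    |(2 * (⌊x / (2 * θ)⌋₊ : K) + 1) * θ - x| ≤ θ := by
  have two_θ_pos : 0 < 2 * θ := by positivity
  have lower : (⌊x / (2 * θ)⌋₊ : K) * (2 * θ) ≤ x :=
    (le_div_iff₀ two_θ_pos).mp (Nat.floor_le (by positivity))
  have upper : x < ((⌊x / (2 * θ)⌋₊ : K) + 1) * (2 * θ) :=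
    (div_lt_iff₀ two_θ_pos).mp (Nat.lt_floor_add_one _)
  rw [abs_le]
  constructor <;> linarith

theorem cos_le_sin_of_abs_sub_pi_div_two_le {θ x : ℝ} (hx : |x - Real.pi / 2| ≤ θ)
    (hθ : θ ≤ Real.pi) : Real.cos θ ≤ Real.sin x :=
  calc
    Real.cos θ ≤ Real.cos |x - Real.pi / 2| :=
      Real.cos_le_cos_of_nonneg_of_le_pi (abs_nonneg _) hθ hx
    _ = Real.sin x := by rw [Real.cos_abs, Real.cos_sub_pi_div_two]

theorem cos_sq_le_sin_sq_of_abs_sub_pi_div_two_le {θ x : ℝ} (hx : |x - Real.pi / 2| ≤ θ)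
    (hθ : θ ≤ Real.pi / 2) : Real.cos θ ^ 2 ≤ Real.sin x ^ 2 := by
  have θ_nonneg : 0 ≤ θ := (abs_nonneg _).trans hx
  have cos_nonneg : 0 ≤ Real.cos θ :=
    Real.cos_nonneg_of_neg_pi_div_two_le_of_le (by linarith [Real.pi_pos]) hθ
  have cos_le_sin : Real.cos θ ≤ Real.sin x :=
    cos_le_sin_of_abs_sub_pi_div_two_le hx (by linarith [Real.pi_pos])
  exact pow_le_pow_left₀ cos_nonneg cos_le_sin 2

theorem cos_sq_eq_one_sub_of_sin_eq_sqrt {θ p : ℝ} (hp : 0 ≤ p) (hθ : Real.sin θ = √p) :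
    Real.cos θ ^ 2 = 1 - p := by
  rw [Real.cos_sq', hθ, Real.sq_sqrt hp]

/-- With `k = ⌊π/(4θ)⌋` Grover iterations, `(2k+1)θ` lies within `θ` of `π/2`, so the
success probability `sin²((2k+1)θ)` is at least `cos²θ`; in particular, when
`sin θ = √(a/N)`, it is at least `1 − a/N`. -/
theorem grover_success_probability_lower_bound
    (θ : ℝ) (hθ0 : 0 < θ) (hθ1 : θ ≤ Real.pi / 2) :
    Real.sin ((2 * (⌊Real.pi / (4 * θ)⌋₊ : ℝ) + 1) * θ) ^ 2 ≥ Real.cos θ ^ 2 ∧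
      ∀ a N : ℕ, 1 ≤ a → a ≤ N → Real.sin θ = Real.sqrt ((a : ℝ) / N) →
        Real.sin ((2 * (⌊Real.pi / (4 * θ)⌋₊ : ℝ) + 1) * θ) ^ 2 ≥ 1 - (a : ℝ) / N := by
  have angle_near : |(2 * (⌊Real.pi / (4 * θ)⌋₊ : ℝ) + 1) * θ - Real.pi / 2| ≤ θ := by
    have quotient_eq : Real.pi / (4 * θ) = Real.pi / 2 / (2 * θ) := by ring
    rw [quotient_eq]
    exact abs_two_mul_floor_add_one_mul_sub_le hθ0 Real.pi_div_two_pos.le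
  have cos_sq_le := cos_sq_le_sin_sq_of_abs_sub_pi_div_two_le angle_near hθ1
  refine ⟨cos_sq_le, fun a N _ _ sin_eq => ?_⟩
  rwa [cos_sq_eq_one_sub_of_sin_eq_sqrt (by positivity) sin_eq] at cos_sq_le
end

section
/- Let n ≥ 1 and m ≥ 1, let C : Fin m → ((Fin n → Bool) → Bool) be a family of clauses, let f : (Fin n → Bool) → Bool be defined by f y = (∀ j, C j y), and for each j let α j y = if C j y then 0 else 1. In EuclideanSpace ℂ ((Fin n → Bool) × ZMod (m+1)) with standard basis vectors e_{(y,c)}, define linear maps: U_j e_{(y,c)} = e_{(y, c + α j y)}, U′_j e_{(y,c)} = e_{(y, c − α j y)} (addition and subtraction in ZMod (m+1)), and Z₀ e_{(y,c)} = (if c = 0 then −1 else 1) • e_{(y,c)}. Then for every y : Fin n → Bool, (U′_1 ∘ U′_2 ∘ ⋯ ∘ U′_m ∘ Z₀ ∘ U_m ∘ ⋯ ∘ U_2 ∘ U_1) e_{(y,0)} = (if f y then −1 else 1) • e_{(y,0)}. -/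
open Finset

/-! Fix an assignment `y`. On the states `|y⟩|c⟩` the operators `U_j` translate the counter, so
after the first pass it holds the number of false clauses. That number is at most `m`, so modulo
`m + 1` it vanishes only if no clause is false, and `Z₀` acts as the scalar `(-1)^{f(y)}`. By
linearity this scalar passes through the `U′_j`, which translate the counter back to `0`. -/

section CounterCircuit

variable {ι R A V : Type*}

theorem foldl_apply_translation [AddMonoid A] {ket : A → V} {U : ι → V → V} {a : ι → A}
    (hU : ∀ j c, U j (ket c) = ket (c + a j)) (l : List ι) (c : A) :
    l.foldl (fun v j => U j v) (ket c) = ket (c + (l.map a).sum) := by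
  induction l generalizing c with
  | nil => simp
  | cons j l ih => rw [List.foldl_cons, hU, ih, List.map_cons, List.sum_cons, add_assoc]

theorem foldl_reverse_apply_translation_neg [AddCommGroup A] {ket : A → V} {U' : ι → V → V}
    {a : ι → A} (hU' : ∀ j c, U' j (ket c) = ket (c - a j)) (l : List ι) (c : A) :
    l.reverse.foldl (fun v j => U' j v) (ket c) = ket (c - (l.map a).sum) := by
  have hU'_add : ∀ j c, U' j (ket c) = ket (c + -a j) := fun j c => by
    rw [hU', sub_eq_add_neg]
  rw [foldl_apply_translation hU'_add, List.map_reverse, List.sum_reverse, sub_eq_add_neg,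
    List.sum_neg, List.map_map, Function.comp_def]

theorem foldl_apply_smul [Semiring R] [AddCommMonoid V] [Module R V] (T : ι → V →ₗ[R] V)
    (l : List ι) (r : R) (v : V) :
    l.foldl (fun v j => T j v) (r • v) = r • l.foldl (fun v j => T j v) v :=
  List.foldl_hom (r • ·) fun v j => (T j).map_smul r v

theorem uncompute_phase_compute [Semiring R] [AddCommMonoid V] [Module R V] [AddCommGroup A]
    {ket : A → V} {U U' : ι → V →ₗ[R] V} {Z : V →ₗ[R] V} {a : ι → A} {phase : A → R}
    (hU : ∀ j c, U j (ket c) = ket (c + a j)) (hU' : ∀ j c, U' j (ket c) = ket (c - a j))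
    (hZ : ∀ c, Z (ket c) = phase c • ket c) (l : List ι) (c : A) :
    l.reverse.foldl (fun v j => U' j v) (Z (l.foldl (fun v j => U j v) (ket c))) =
      phase (c + (l.map a).sum) • ket c := by
  rw [foldl_apply_translation hU, hZ, foldl_apply_smul, foldl_reverse_apply_translation_neg hU',
    add_sub_cancel_right]

end CounterCircuit

theorem zmod_natCast_eq_zero_iff_of_lt {k N : ℕ} (hk : k < N) : (k : ZMod N) = 0 ↔ k = 0 := by
  rw [ZMod.natCast_eq_zero_iff]
  exact ⟨fun hdvd => Nat.eq_zero_of_dvd_of_lt hdvd hk, fun hk0 => hk0 ▸ dvd_zero N⟩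

theorem zmod_natCast_card_filter_not_eq_zero_iff {ι : Type*} [Fintype ι] {N : ℕ}
    (hN : Fintype.card ι < N) (p : ι → Prop) [DecidablePred p] :
    ((#{j | ¬p j} : ℕ) : ZMod N) = 0 ↔ ∀ j, p j := by
  rw [zmod_natCast_eq_zero_iff_of_lt ((card_le_univ _).trans_lt hN), card_eq_zero,
    filter_eq_empty_iff]
  simp only [mem_univ, not_not, true_imp_iff]

theorem cnf_oracle_circuit_correct_general {Y R V : Type*} [Ring R] [AddCommGroup V] [Module R V]
    {m N : ℕ} (hN : m < N) (C : Fin m → Y → Bool) (f : Y → Bool)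
    (hf : ∀ y, f y = true ↔ ∀ j, C j y = true) (α : Fin m → Y → ℕ)
    (hα : ∀ j y, α j y = if C j y then 0 else 1) (ket : Y → ZMod N → V)
    (U U' : Fin m → V →ₗ[R] V) (Z₀ : V →ₗ[R] V)
    (hU : ∀ j y c, U j (ket y c) = ket y (c + α j y))
    (hU' : ∀ j y c, U' j (ket y c) = ket y (c - α j y))
    (hZ₀ : ∀ y c, Z₀ (ket y c) = (if c = 0 then (-1 : R) else 1) • ket y c) (y : Y) :
    (List.ofFn U').reverse.foldl (fun v T => T v)
        (Z₀ ((List.ofFn U).foldl (fun v T => T v) (ket y 0))) =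
      (if f y then (-1 : R) else 1) • ket y 0 := by
  have counter_eq_card :
      ((List.finRange m).map fun j => (α j y : ZMod N)).sum = (#{j | ¬C j y} : ℕ) := by
    rw [← List.ofFn_eq_map, List.sum_ofFn, ← sum_boole]
    simp only [hα, ite_not, Nat.cast_ite, Nat.cast_zero, Nat.cast_one]
  have counter_eq_zero_iff : ((#{j | ¬C j y} : ℕ) : ZMod N) = 0 ↔ f y = true := by
    rw [zmod_natCast_card_filter_not_eq_zero_iff (by rwa [Fintype.card_fin]), hf]
  simp only [List.ofFn_eq_map, ← List.map_reverse, List.foldl_map]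
  rw [uncompute_phase_compute (hU · y) (hU' · y) (hZ₀ y), zero_add, counter_eq_card]
  simp only [counter_eq_zero_iff]

/-- Theorem 5 of the paper (correctness of the oracle circuit for a CNF): the circuit
`U′_1 ∘ ⋯ ∘ U′_m ∘ Z₀ ∘ U_m ∘ ⋯ ∘ U_1` maps `|y⟩|0⟩` to `(−1)^{f(y)}|y⟩|0⟩`, where
`U_j` (resp. `U′_j`) adds (resp. subtracts) the false-clause indicator `α j y` to the
counter register modulo `m+1`, and `Z₀` flips the sign exactly on counter value `0`. -/
theorem cnf_oracle_circuit_correct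
    (n m : ℕ) (hn : 1 ≤ n) (hm : 1 ≤ m)
    (C : Fin m → ((Fin n → Bool) → Bool))
    (f : (Fin n → Bool) → Bool)
    (hf : ∀ y, f y = true ↔ ∀ j, C j y = true)
    (α : Fin m → (Fin n → Bool) → ℕ)
    (hα : ∀ j y, α j y = if C j y then 0 else 1)
    (U U' : Fin m → (EuclideanSpace ℂ ((Fin n → Bool) × ZMod (m + 1)) →ₗ[ℂ]
      EuclideanSpace ℂ ((Fin n → Bool) × ZMod (m + 1))))
    (Z₀ : EuclideanSpace ℂ ((Fin n → Bool) × ZMod (m + 1)) →ₗ[ℂ]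
      EuclideanSpace ℂ ((Fin n → Bool) × ZMod (m + 1)))
    (hU : ∀ (j : Fin m) (y : Fin n → Bool) (c : ZMod (m + 1)),
      U j (EuclideanSpace.single (y, c) (1 : ℂ)) =
        EuclideanSpace.single (y, c + ((α j y : ℕ) : ZMod (m + 1))) (1 : ℂ))
    (hU' : ∀ (j : Fin m) (y : Fin n → Bool) (c : ZMod (m + 1)),
      U' j (EuclideanSpace.single (y, c) (1 : ℂ)) =
        EuclideanSpace.single (y, c - ((α j y : ℕ) : ZMod (m + 1))) (1 : ℂ))
    (hZ₀ : ∀ (y : Fin n → Bool) (c : ZMod (m + 1)),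
      Z₀ (EuclideanSpace.single (y, c) (1 : ℂ)) =
        (if c = 0 then (-1 : ℂ) else 1) • EuclideanSpace.single (y, c) (1 : ℂ)) :
    ∀ y : Fin n → Bool,
      (List.ofFn fun j : Fin m => U' j).reverse.foldl (fun v T => T v)
          (Z₀ ((List.ofFn fun j : Fin m => U j).foldl (fun v T => T v)
            (EuclideanSpace.single (y, (0 : ZMod (m + 1))) (1 : ℂ)))) =
        (if f y then (-1 : ℂ) else 1) •
          EuclideanSpace.single (y, (0 : ZMod (m + 1))) (1 : ℂ) :=
  cnf_oracle_circuit_correct_general m.lt_succ_self C f hf α hα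
    (fun y c => EuclideanSpace.single (y, c) 1) U U' Z₀ hU hU' hZ₀
end
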